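/- Let P be a propositional normal logic program with well-founded model M (the least fixed point of W_P). Then M is a model of P, P satisfies (WF) with respect to M and some M-partial level mapping, and for every model I of P and every I-partial level mapping l such that P satisfies (WF) with respect to I and l, one has I ⊆ M. That is, M is the greatest model among all models I for which there exists an I-partial level mapping l for P such that P satisfies (WF) with respect to I and l. -/

import Mathlib

namespace LP

/-- A literal over a set of propositional atoms: an atom or a negated atom. -/
inductive Lit (atom : Type) where
  | pos : atom → Lit atom
  | neg : atom → Lit atom

/-- The underlying atom of a literal. -/
def Lit.atomOf {atom : Type} : Lit atom → atom
  | .pos a => a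
  | .neg a => a

/-- A clause `head ← pos₁,…,posₙ, ¬neg₁,…,¬negₘ`. -/
structure Clause (atom : Type) where
  head : atom
  pos : Finset atom
  neg : Finset atom

variable {atom : Type}

/-- A (propositional) normal logic program: a set of clauses. -/
abbrev Program (atom : Type) := Set (Clause atom)

/-- Partial interpretations: sets of literals. -/
abbrev Interp (atom : Type) := Set (Lit atom)

def Consistent (I : Interp atom) : Prop := ∀ a : atom, ¬ (Lit.pos a ∈ I ∧ Lit.neg a ∈ I)

def Total (I : Interp atom) : Prop := ∀ a : atom, Lit.pos a ∈ I ∨ Lit.neg a ∈ I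

/-- An atom is defined (true or false, i.e. not undefined) in `I`. -/
def Defined (I : Interp atom) (A : atom) : Prop := Lit.pos A ∈ I ∨ Lit.neg A ∈ I

/-- Every body literal of the clause is true in `I`. -/
def BodyTrue (I : Interp atom) (C : Clause atom) : Prop :=
  (∀ a ∈ C.pos, Lit.pos a ∈ I) ∧ (∀ b ∈ C.neg, Lit.neg b ∈ I)

/-- Some body literal of the clause is false in `I`. -/
def BodyFalse (I : Interp atom) (C : Clause atom) : Prop :=
  (∃ a ∈ C.pos, Lit.neg a ∈ I) ∨ (∃ b ∈ C.neg, Lit.pos b ∈ I)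

/-- Three-valued model. -/
def Model3 (P : Program atom) (I : Interp atom) : Prop :=
  Consistent I ∧ ∀ C ∈ P,
    (BodyTrue I C → Lit.pos C.head ∈ I) ∧ (¬ BodyFalse I C → Lit.neg C.head ∉ I)

/-- Two-valued model. -/
def Model2 (P : Program atom) (M : Set atom) : Prop :=
  ∀ C ∈ P, (∀ a ∈ C.pos, a ∈ M) → (∀ b ∈ C.neg, b ∉ M) → C.head ∈ M

/-- A program is definite if no clause has negative body literals. -/
def Definite (P : Program atom) : Prop := ∀ C ∈ P, C.neg = ∅

/-- The one-step operator `T_P⁺` for definite programs. -/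
def Tplus (P : Program atom) (M : Set atom) : Set atom :=
  {A | ∃ C ∈ P, C.head = A ∧ C.neg = ∅ ∧ ∀ a ∈ C.pos, a ∈ M}

def TplusIter (P : Program atom) : ℕ → Set atom
  | 0 => ∅
  | n + 1 => Tplus P (TplusIter P n)

/-- `T_P⁺ ↑ ω`, the least two-valued model of a definite program. -/
def TplusOmega (P : Program atom) : Set atom := ⋃ n, TplusIter P n

/-- The Gelfond–Lifschitz reduct `P/M`. -/
def GLreduct (P : Program atom) (M : Set atom) : Program atom :=
  {C' | ∃ C ∈ P, (∀ b ∈ C.neg, b ∉ M) ∧ C' = ⟨C.head, C.pos, ∅⟩}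

/-- The Gelfond–Lifschitz operator. -/
def GLop (P : Program atom) (M : Set atom) : Set atom := TplusOmega (GLreduct P M)

/-- Stable model. -/
def Stable (P : Program atom) (M : Set atom) : Prop := GLop P M = M

def posLits (S : Set atom) : Interp atom := Lit.pos '' S
def negLits (S : Set atom) : Interp atom := Lit.neg '' S

/-- Three-valued immediate-consequence operator `T_P`. -/
def TP (P : Program atom) (I : Interp atom) : Set atom :=
  {A | ∃ C ∈ P, C.head = A ∧ BodyTrue I C}

/-- `F_P`: atoms all of whose clauses have false bodies. -/
def FP (P : Program atom) (I : Interp atom) : Set atom :=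
  {A | ∀ C ∈ P, C.head = A → BodyFalse I C}

/-- Fitting's operator `Φ_P`. -/
def Phi (P : Program atom) (I : Interp atom) : Interp atom :=
  posLits (TP P I) ∪ negLits (FP P I)

/-- Knaster–Tarski least (pre-)fixed point of an operator on sets. -/
def lfpSet {L : Type*} (F : Set L → Set L) : Set L := ⋂₀ {I | F I ⊆ I}

/-- Knaster–Tarski greatest (post-)fixed point of an operator on sets. -/
def gfpSet {L : Type*} (F : Set L → Set L) : Set L := ⋃₀ {I | I ⊆ F I}

/-- The Fitting (Kripke–Kleene) model: least fixed point of `Φ_P`. -/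
def FittingModel (P : Program atom) : Interp atom := lfpSet (Phi P)

/-- Transfinite iteration `F ↑ α` of an operator starting from `∅`. -/
noncomputable def iterOrd {L : Type*} (F : Set L → Set L) (α : Ordinal.{0}) : Set L :=
  Ordinal.limitRecOn α ∅ (fun _ ih => F ih) (fun o _ ih => ⋃ β, ⋃ h : β < o, ih β h)

/-- `U` is an unfounded set of `P` with respect to `I`. -/
def Unfounded (P : Program atom) (I : Interp atom) (U : Set atom) : Prop :=
  ∀ A ∈ U, ∀ C ∈ P, C.head = A → BodyFalse I C ∨ ∃ a ∈ C.pos, a ∈ U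

/-- The greatest unfounded set of `P` with respect to `I`. -/
def UP (P : Program atom) (I : Interp atom) : Set atom := ⋃₀ {U | Unfounded P I U}

/-- The van Gelder–Ross–Schlipf operator `W_P`. -/
def WP (P : Program atom) (I : Interp atom) : Interp atom :=
  posLits (TP P I) ∪ negLits (UP P I)

/-- The well-founded model: least fixed point of `W_P`. -/
def WFModel (P : Program atom) : Interp atom := lfpSet (WP P)

/-- `P` satisfies (F) with respect to `I` and the level mapping `l`. -/
def CondF (P : Program atom) (I : Interp atom) (l : atom → Ordinal.{0}) : Prop :=
  ∀ A : atom, Defined I A →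
    (Lit.pos A ∈ I ∧ ∃ C ∈ P, C.head = A ∧
        (∀ a ∈ C.pos, Lit.pos a ∈ I ∧ l a < l A) ∧
        (∀ b ∈ C.neg, Lit.neg b ∈ I ∧ l b < l A)) ∨
    (Lit.neg A ∈ I ∧ ∀ C ∈ P, C.head = A →
        (∃ a ∈ C.pos, Lit.neg a ∈ I ∧ l a < l A) ∨
        (∃ b ∈ C.neg, Lit.pos b ∈ I ∧ l b < l A))

/-- `P` satisfies (WF) with respect to `I` and the level mapping `l`. -/
def CondWF (P : Program atom) (I : Interp atom) (l : atom → Ordinal.{0}) : Prop :=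
  ∀ A : atom, Defined I A →
    (Lit.pos A ∈ I ∧ ∃ C ∈ P, C.head = A ∧
        (∀ a ∈ C.pos, Lit.pos a ∈ I ∧ l a < l A) ∧
        (∀ b ∈ C.neg, Lit.neg b ∈ I ∧ l b < l A)) ∨
    (Lit.neg A ∈ I ∧ ∀ C ∈ P, C.head = A →
        (∃ a ∈ C.pos, Lit.neg a ∈ I ∧ l a ≤ l A) ∨
        (∃ b ∈ C.neg, Lit.pos b ∈ I ∧ l b < l A))

/-- `P` satisfies (WS) with respect to `I` and the level mapping `l`. -/
def CondWS (P : Program atom) (I : Interp atom) (l : atom → Ordinal.{0}) : Prop :=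
  ∀ A : atom, Defined I A →
    (Lit.pos A ∈ I ∧ ∃ C ∈ P, C.head = A ∧
        (∀ a ∈ C.pos, Lit.pos a ∈ I ∧ l a < l A) ∧
        (∀ b ∈ C.neg, Lit.neg b ∈ I ∧ l b < l A)) ∨
    (Lit.neg A ∈ I ∧ ∀ C ∈ P, C.head = A →
        (∃ a ∈ C.pos, Lit.neg a ∈ I ∧ l a < l A) ∨
        ((∀ a ∈ C.pos, l a ≤ l A) ∧ (∀ b ∈ C.neg, l b < l A) ∧
            ∃ a ∈ C.pos, Lit.neg a ∈ I) ∨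
        (∃ b ∈ C.neg, Lit.pos b ∈ I ∧ l b < l A))

/-- `A` refers to `B`. -/
def RefersTo (P : Program atom) (A B : atom) : Prop :=
  ∃ C ∈ P, C.head = A ∧ (B ∈ C.pos ∨ B ∈ C.neg)

/-- `A` refers negatively to `B`. -/
def RefersNeg (P : Program atom) (A B : atom) : Prop :=
  ∃ C ∈ P, C.head = A ∧ B ∈ C.neg

/-- `DepOn P A B`: `A` depends on `B`, i.e. `B ≤ A`. -/
def DepOn (P : Program atom) : atom → atom → Prop := Relation.TransGen (RefersTo P)

/-- `DepNeg P B A`: `B < A`, i.e. `A` depends negatively on `B`. -/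
def DepNeg (P : Program atom) (B A : atom) : Prop :=
  ∃ C D, RefersNeg P C D ∧ (DepOn P A C ∨ C = A) ∧ (DepOn P D B ∨ B = D)

/-- `A ~ B`. -/
def Sim (P : Program atom) (A B : atom) : Prop :=
  A = B ∨ (DepNeg P A B ∧ DepNeg P B A)

/-- The components of `P`: equivalence classes of `~`. -/
def IsComponent (P : Program atom) (C : Set atom) : Prop :=
  ∃ A : atom, C = {B | Sim P A B}

/-- A trivial component: a singleton `{A}` with `A ≮ A`. -/
def TrivialComponent (P : Program atom) (C : Set atom) : Prop :=
  ∃ A : atom, C = {A} ∧ ¬ DepNeg P A A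

/-- The ordering `≺` on components. -/
def CompLt (P : Program atom) (C₁ C₂ : Set atom) : Prop :=
  C₁ ≠ C₂ ∧ ∀ A₁ ∈ C₁, ∃ A₂ ∈ C₂, DepNeg P A₁ A₂

def MinimalComponent (P : Program atom) (C : Set atom) : Prop :=
  IsComponent P C ∧ ¬ ∃ C₂, IsComponent P C₂ ∧ CompLt P C₂ C

/-- The bottom stratum `S(P)`: union of all minimal components. -/
def bottomStratum (P : Program atom) : Set atom :=
  {A | ∃ C, MinimalComponent P C ∧ A ∈ C}

/-- The bottom layer `L(P)`: clauses with head in the bottom stratum. -/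
def bottomLayer (P : Program atom) : Program atom :=
  {C ∈ P | C.head ∈ bottomStratum P}

/-- Delete from the body of `C` all literals true in `I`. -/
noncomputable def reduceClause (I : Interp atom) (C : Clause atom) : Clause atom :=
  letI : ∀ p : Prop, Decidable p := fun p => Classical.propDecidable p
  ⟨C.head, C.pos.filter (fun a => Lit.pos a ∉ I), C.neg.filter (fun b => Lit.neg b ∉ I)⟩

/-- Steps (1) and (2) of the reduct of `P` with respect to `I`. -/
noncomputable def step12 (P : Program atom) (I : Interp atom) : Program atom :=
  {C' | ∃ C ∈ P, Lit.pos C.head ∉ I ∧ ¬ BodyFalse I C ∧ C' = reduceClause I C}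

def IsUnitClause (C : Clause atom) : Prop := C.pos = ∅ ∧ C.neg = ∅

/-- The reduct `P/I` of Przymusinska–Przymusinski (steps (1)–(3)). -/
noncomputable def reduct (P : Program atom) (I : Interp atom) : Program atom :=
  {C ∈ step12 P I | IsUnitClause C ∨ ¬ ∃ C' ∈ step12 P I, C'.head = C.head ∧ IsUnitClause C'}

/-- The atoms occurring in `P`. -/
def atomsOf (P : Program atom) : Set atom :=
  {A | ∃ C ∈ P, A = C.head ∨ A ∈ C.pos ∨ A ∈ C.neg}

/-- `R`: atoms undefined in `N` which are eliminated from `P` by reducing w.r.t. `N`. -/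
noncomputable def Ratoms (P : Program atom) (N : Interp atom) : Set atom :=
  {A | A ∈ atomsOf P ∧ A ∉ atomsOf (reduct P N) ∧ ¬ Defined N A}

/-- The definite (partial) model of a definite program `Q`. -/
def defPartialModel (Q : Program atom) : Interp atom :=
  posLits (TplusOmega Q) ∪ negLits (atomsOf Q \ TplusOmega Q)

/-- The stopping condition of the weakly perfect model construction at `N`. -/
noncomputable def stopCond (P : Program atom) (N : Interp atom) : Prop :=
  reduct P N = ∅ ∨ bottomStratum (reduct P N) = ∅ ∨
    ∃ C ∈ bottomLayer (reduct P N), C.neg ≠ ∅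

/-- `M_α` computed from `N_α` (empty if the construction has stopped). -/
noncomputable def Mstep (P : Program atom) (N : Interp atom) : Interp atom :=
  letI : ∀ p : Prop, Decidable p := fun p => Classical.propDecidable p
  if stopCond P N then ∅
  else defPartialModel (bottomLayer (reduct P N)) ∪ negLits (Ratoms P N)

/-- `N_α = ⋃_{0<δ<α} M_δ` of the weakly perfect model construction. -/
noncomputable def Nseq (P : Program atom) : Ordinal.{0} → Interp atom :=
  Ordinal.lt_wf.fix (C := fun _ => Interp atom)
    (fun α ih => ⋃ β : Ordinal.{0}, ⋃ h : β < α, Mstep P (ih β h))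

/-- The stage at which the weakly perfect model construction stops. -/
noncomputable def wpStop (P : Program atom) : Ordinal.{0} :=
  sInf {α | stopCond P (Nseq P α)}

/-- The weakly perfect model `M_P = N_α ∪ ¬R_α` at the stopping stage `α`. -/
noncomputable def weaklyPerfectModel (P : Program atom) : Interp atom :=
  Nseq P (wpStop P) ∪ negLits (Ratoms P (Nseq P (wpStop P)))

/-- Clause subsumption `C₁ ≼ C₂`. -/
def ClauseSub (C₁ C₂ : Clause atom) : Prop :=
  C₁.head = C₂.head ∧ C₁.pos ⊆ C₂.pos ∧ C₁.neg ⊆ C₂.neg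

/-- `P'` subsumes `Q` model-consistently with respect to `I`: `P' ≼_I Q`. -/
def SubsumesMC (P' Q : Program atom) (I : Interp atom) : Prop :=
  (∀ C₁ ∈ P', ∃ C₂ ∈ Q, ClauseSub C₁ C₂ ∧
      (∀ a ∈ C₂.pos, a ∉ C₁.pos → Lit.pos a ∈ I) ∧
      (∀ b ∈ C₂.neg, b ∉ C₁.neg → Lit.neg b ∈ I)) ∧
  (∀ C₂ ∈ Q, BodyTrue I C₂ → Lit.pos C₂.head ∉ I → ∃ C₁ ∈ P', ClauseSub C₁ C₂)

/-!
*Consistency.* The literals of the well-founded model `M` whose complement is not in `M` form a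
prefixed point of `W_P`, hence they exhaust `M`.

*Level mapping.* The level of an atom is the first `α` for which `W_P(W_P↑α)` decides it. A true
atom is derived from literals of `W_P↑α`, which have smaller levels. A false atom lies in the
greatest unfounded set for `W_P↑α`, all of whose members have level at most `α`; this is the
source of the weak inequality in (WFiia).

*Maximality.* If `P` satisfies (WF) with respect to `I` and `l`, then every literal of `I` is
obtained by one application of `W_P` to the literals of `I` of smaller level: for a false atom `A`
the false atoms of level at most `l A` form an unfounded set. Induction on levels gives `I ⊆ M`.
-/

section FixedPoints

universe u

variable {L : Type u} (f : Set L →o Set L)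

theorem mem_lfpApprox_bot {x : L} {α : Ordinal.{u}} :
    x ∈ OrdinalApprox.lfpApprox f ⊥ α ↔ ∃ β < α, x ∈ f (OrdinalApprox.lfpApprox f ⊥ β) := by
  rw [OrdinalApprox.lfpApprox]
  simp

theorem exists_mem_map_lfpApprox_bot {x : L} (hx : x ∈ f.lfp) :
    ∃ α : Ordinal.{u}, x ∈ f (OrdinalApprox.lfpApprox f ⊥ α) := by
  obtain ⟨γ, hγ⟩ := OrdinalApprox.lfp_mem_range_lfpApprox f
  obtain ⟨α, -, hα⟩ := (mem_lfpApprox_bot f).1 (hγ ▸ hx)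
  exact ⟨α, hα⟩

theorem subset_lfp_of_rank {ι : Type*} [Preorder ι] [WellFoundedLT ι] {I : Set L} (r : L → ι)
    (hr : ∀ x ∈ I, x ∈ f {y ∈ I | r y < r x}) : I ⊆ f.lfp := by
  intro x hx
  induction x using (InvImage.wf r wellFounded_lt).induction with
  | h x ih => exact f.map_le_lfp (fun y hy => ih y hy.2 hy.1) (hr x hx)

end FixedPoints

section Operators

variable {P : Program atom} {I J : Interp atom} {C : Clause atom} {A : atom}

theorem BodyTrue.mono (hIJ : I ⊆ J) (hC : BodyTrue I C) : BodyTrue J C :=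
  ⟨fun a ha => hIJ (hC.1 a ha), fun b hb => hIJ (hC.2 b hb)⟩

theorem BodyFalse.mono (hIJ : I ⊆ J) : BodyFalse I C → BodyFalse J C :=
  Or.imp (fun ⟨a, ha, h⟩ => ⟨a, ha, hIJ h⟩) (fun ⟨b, hb, h⟩ => ⟨b, hb, hIJ h⟩)

theorem BodyTrue.not_bodyFalse (hC : BodyTrue I C)
    (hIJ : ∀ a, Lit.pos a ∈ I → Lit.neg a ∉ J) (hJI : ∀ a, Lit.pos a ∈ J → Lit.neg a ∉ I) :
    ¬ BodyFalse J C := by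
  rintro (⟨a, ha, hneg⟩ | ⟨b, hb, hpos⟩)
  · exact hIJ a (hC.1 a ha) hneg
  · exact hJI b hpos (hC.2 b hb)

theorem Unfounded.mono {U : Set atom} (hIJ : I ⊆ J) (hU : Unfounded P I U) : Unfounded P J U :=
  fun A hA C hC hhead => (hU A hA C hC hhead).imp_left (BodyFalse.mono hIJ)

theorem Unfounded.subset_UP {U : Set atom} (hU : Unfounded P I U) : U ⊆ UP P I :=
  Set.subset_sUnion_of_mem hU

theorem unfounded_UP (P : Program atom) (I : Interp atom) : Unfounded P I (UP P I) := by
  rintro A ⟨U, hU, hA⟩ C hC hhead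
  exact (hU A hA C hC hhead).imp_right fun ⟨a, ha, haU⟩ => ⟨a, ha, hU.subset_UP haU⟩

theorem pos_mem_WP : Lit.pos A ∈ WP P I ↔ ∃ C ∈ P, C.head = A ∧ BodyTrue I C := by
  simp [WP, posLits, negLits, TP]

theorem neg_mem_WP : Lit.neg A ∈ WP P I ↔ A ∈ UP P I := by
  simp [WP, posLits, negLits]

theorem WP_mono (P : Program atom) : Monotone (WP P) := by
  rintro I J hIJ (A | A) hA
  · obtain ⟨C, hC, hhead, hbody⟩ := pos_mem_WP.1 hA
    exact pos_mem_WP.2 ⟨C, hC, hhead, hbody.mono hIJ⟩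
  · exact neg_mem_WP.2 (((unfounded_UP P I).mono hIJ).subset_UP (neg_mem_WP.1 hA))

/-- The van Gelder–Ross–Schlipf operator `W_P` as a bundled monotone map, which gives access to
the library's theory of least fixed points. -/
def wpHom (P : Program atom) : Interp atom →o Interp atom := ⟨WP P, WP_mono P⟩

theorem WP_WFModel (P : Program atom) : WP P (WFModel P) = WFModel P := (wpHom P).map_lfp

theorem WFModel_subset (hI : WP P I ⊆ I) : WFModel P ⊆ I := (wpHom P).lfp_le hI

theorem WP_subset_WFModel (hI : I ⊆ WFModel P) : WP P I ⊆ WFModel P := (wpHom P).map_le_lfp hI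

theorem neg_mem_WFModel : Lit.neg A ∈ WFModel P ↔ A ∈ UP P (WFModel P) := by
  rw [← neg_mem_WP, WP_WFModel]

theorem defined_atomOf {x : Lit atom} (hx : x ∈ I) : Defined I x.atomOf := by
  cases x with
  | pos A => exact Or.inl hx
  | neg A => exact Or.inr hx

theorem Consistent.mem_of_defined {x : Lit atom} (hJ : Consistent J) (hIJ : I ⊆ J) (hx : x ∈ J)
    (hdef : Defined I x.atomOf) : x ∈ I := by
  rcases x with A | A
  · exact hdef.resolve_right fun hneg => hJ A ⟨hx, hIJ hneg⟩
  · exact hdef.resolve_left fun hpos => hJ A ⟨hIJ hpos, hx⟩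

end Operators

section Consistency

variable {P : Program atom} {I : Interp atom} {C : Clause atom} {A : atom}

/-- The literals of `I` whose complement does not belong to `I`. For the well-founded model this is
a prefixed point of `W_P`, which forces the model to be consistent. -/
def consistentPart (I : Interp atom) : Interp atom :=
  {x ∈ I | ¬ (Lit.pos x.atomOf ∈ I ∧ Lit.neg x.atomOf ∈ I)}

theorem consistentPart_subset (I : Interp atom) : consistentPart I ⊆ I := Set.sep_subset _ _

theorem pos_mem_consistentPart :
    Lit.pos A ∈ consistentPart I ↔ Lit.pos A ∈ I ∧ Lit.neg A ∉ I :=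
  and_congr_right fun hA => not_congr (and_iff_right hA)

theorem neg_mem_consistentPart :
    Lit.neg A ∈ consistentPart I ↔ Lit.neg A ∈ I ∧ Lit.pos A ∉ I :=
  and_congr_right fun hA => not_congr (and_iff_left hA)

theorem not_bodyFalse_of_bodyTrue_consistentPart (hC : BodyTrue (consistentPart I) C) :
    ¬ BodyFalse I C :=
  hC.not_bodyFalse (fun _ ha => (pos_mem_consistentPart.1 ha).2)
    fun _ ha ha' => (neg_mem_consistentPart.1 ha').2 ha

theorem not_bodyFalse_consistentPart_of_bodyTrue (hC : BodyTrue I C) :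
    ¬ BodyFalse (consistentPart I) C :=
  hC.not_bodyFalse (fun _ ha ha' => (neg_mem_consistentPart.1 ha').2 ha)
    fun _ ha => (pos_mem_consistentPart.1 ha).2

theorem Unfounded.pos_notMem_WFModel {U : Set atom} (hU : Unfounded P I U)
    (hI : ∀ C, BodyTrue (WFModel P) C → ¬ BodyFalse I C) (hA : A ∈ U) :
    Lit.pos A ∉ WFModel P := by
  have hprefixed : WP P (WFModel P \ posLits U) ⊆ WFModel P \ posLits U := by
    refine fun x hx => ⟨WP_subset_WFModel Set.sdiff_subset hx, ?_⟩
    rintro ⟨B, hB, rfl⟩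
    obtain ⟨C, hC, hhead, hbody⟩ := pos_mem_WP.1 hx
    rcases hU B hB C hC hhead with hfalse | ⟨a, ha, haU⟩
    · exact hI C (hbody.mono Set.sdiff_subset) hfalse
    · exact (hbody.1 a ha).2 ⟨a, haU, rfl⟩
  exact fun hpos => (WFModel_subset hprefixed hpos).2 ⟨A, hA, rfl⟩

theorem WP_consistentPart_WFModel_subset (P : Program atom) :
    WP P (consistentPart (WFModel P)) ⊆ consistentPart (WFModel P) := by
  intro x hx
  have hxM : x ∈ WFModel P := WP_subset_WFModel (consistentPart_subset _) hx
  rcases x with A | A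
  · refine pos_mem_consistentPart.2 ⟨hxM, fun hneg => ?_⟩
    obtain ⟨C, hC, hhead, hbody⟩ := pos_mem_WP.1 hx
    rcases unfounded_UP P _ A (neg_mem_WFModel.1 hneg) C hC hhead with hfalse | ⟨a, ha, haU⟩
    · exact not_bodyFalse_of_bodyTrue_consistentPart hbody hfalse
    · exact (pos_mem_consistentPart.1 (hbody.1 a ha)).2 (neg_mem_WFModel.2 haU)
  · exact neg_mem_consistentPart.2 ⟨hxM, (unfounded_UP P _).pos_notMem_WFModel
      (fun _ => not_bodyFalse_consistentPart_of_bodyTrue) (neg_mem_WP.1 hx)⟩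

theorem consistent_WFModel (P : Program atom) : Consistent (WFModel P) := fun _ ⟨hpos, hneg⟩ =>
  (pos_mem_consistentPart.1 (WFModel_subset (WP_consistentPart_WFModel_subset P) hpos)).2 hneg

theorem model3_WFModel (P : Program atom) : Model3 P (WFModel P) := by
  refine ⟨consistent_WFModel P, fun C hC => ⟨fun hbody => ?_, fun hbody hneg => ?_⟩⟩
  · exact WP_subset_WFModel subset_rfl (pos_mem_WP.2 ⟨C, hC, rfl, hbody⟩)
  · rcases unfounded_UP P _ _ (neg_mem_WFModel.1 hneg) C hC rfl with hfalse | ⟨a, ha, haU⟩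
    · exact hbody hfalse
    · exact hbody (Or.inl ⟨a, ha, neg_mem_WFModel.2 haU⟩)

end Consistency

section LevelMapping

variable {P : Program atom} {α : Ordinal.{0}} {x : Lit atom}

/-- The transfinite iterate `W_P↑α`, taken from the library's approximants of least fixed points,
which use the uniform recursion `W_P↑α = ⋃ β < α, W_P(W_P↑β)`. -/
noncomputable def wpStage (P : Program atom) (α : Ordinal.{0}) : Interp atom :=
  OrdinalApprox.lfpApprox (wpHom P) ⊥ α

/-- The level of an atom in the well-founded model: the least `α` such that the atom is decided
by `W_P↑(α + 1)`. Atoms undefined in the model get the junk value `0`. -/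
noncomputable def wfLevel (P : Program atom) (A : atom) : Ordinal.{0} :=
  sInf {α | Defined (WP P (wpStage P α)) A}

theorem wpStage_subset_WFModel (P : Program atom) (α : Ordinal.{0}) :
    wpStage P α ⊆ WFModel P :=
  OrdinalApprox.lfpApprox_le_of_mem_fixedPoints (wpHom P) (WP_WFModel P) bot_le α

theorem wfLevel_le_of_mem_WP_wpStage (hx : x ∈ WP P (wpStage P α)) :
    wfLevel P x.atomOf ≤ α :=
  csInf_le' (defined_atomOf hx)

theorem wfLevel_lt_of_mem_wpStage (hx : x ∈ wpStage P α) : wfLevel P x.atomOf < α := by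
  obtain ⟨β, hβα, hβ⟩ := (mem_lfpApprox_bot (wpHom P)).1 hx
  exact (wfLevel_le_of_mem_WP_wpStage hβ).trans_lt hβα

theorem mem_WP_wpStage_wfLevel (hx : x ∈ WFModel P) :
    x ∈ WP P (wpStage P (wfLevel P x.atomOf)) := by
  obtain ⟨α, hα⟩ := exists_mem_map_lfpApprox_bot (wpHom P) hx
  have hdef : Defined (WP P (wpStage P (wfLevel P x.atomOf))) x.atomOf :=
    csInf_mem (s := {β | Defined (WP P (wpStage P β)) x.atomOf}) ⟨α, defined_atomOf hα⟩
  exact (consistent_WFModel P).mem_of_defined (WP_subset_WFModel (wpStage_subset_WFModel P _))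
    hx hdef

theorem condWF_WFModel (P : Program atom) : CondWF P (WFModel P) (wfLevel P) := by
  have mem_and_lt {x : Lit atom} {α : Ordinal.{0}} (hx : x ∈ wpStage P α) :
      x ∈ WFModel P ∧ wfLevel P x.atomOf < α :=
    ⟨wpStage_subset_WFModel P α hx, wfLevel_lt_of_mem_wpStage hx⟩
  rintro A (hA | hA)
  · obtain ⟨C, hC, hhead, hpos, hneg⟩ := pos_mem_WP.1 (mem_WP_wpStage_wfLevel hA)
    exact Or.inl ⟨hA, C, hC, hhead, fun a ha => mem_and_lt (hpos a ha),
      fun b hb => mem_and_lt (hneg b hb)⟩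
  · refine Or.inr ⟨hA, fun C hC hhead => ?_⟩
    rcases unfounded_UP P _ A (neg_mem_WP.1 (mem_WP_wpStage_wfLevel hA)) C hC hhead with
      (⟨a, ha, hneg⟩ | ⟨b, hb, hpos⟩) | ⟨a, ha, haU⟩
    · exact Or.inl ⟨a, ha, (mem_and_lt hneg).imp_right le_of_lt⟩
    · exact Or.inr ⟨b, hb, mem_and_lt hpos⟩
    · have hneg := neg_mem_WP.2 haU
      exact Or.inl ⟨a, ha, WP_subset_WFModel (wpStage_subset_WFModel P _) hneg,
        wfLevel_le_of_mem_WP_wpStage hneg⟩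

end LevelMapping

section Maximality

variable {P : Program atom} {I : Interp atom} {l : atom → Ordinal.{0}} {A : atom}

theorem CondWF.pos_mem_WP (hl : CondWF P I l) (hI : Consistent I) (hA : Lit.pos A ∈ I) :
    Lit.pos A ∈ WP P {y ∈ I | l y.atomOf < l A} := by
  obtain ⟨-, C, hC, hhead, hbody⟩ := (hl A (Or.inl hA)).resolve_right fun h => hI A ⟨hA, h.1⟩
  exact LP.pos_mem_WP.2 ⟨C, hC, hhead, hbody⟩

theorem CondWF.unfounded_neg_le (hl : CondWF P I l) (hI : Consistent I) (α : Ordinal.{0}) :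
    Unfounded P {y ∈ I | l y.atomOf < α} {B | Lit.neg B ∈ I ∧ l B ≤ α} := by
  rintro B ⟨hB, hBα⟩ C hC hhead
  have hclauses := ((hl B (Or.inr hB)).resolve_left fun h => hI B ⟨h.1, hB⟩).2
  rcases hclauses C hC hhead with ⟨a, ha, hneg, haB⟩ | ⟨b, hb, hpos, hbB⟩
  · exact Or.inr ⟨a, ha, hneg, haB.trans hBα⟩
  · exact Or.inl (Or.inr ⟨b, hb, hpos, hbB.trans_le hBα⟩)

theorem CondWF.neg_mem_WP (hl : CondWF P I l) (hI : Consistent I) (hA : Lit.neg A ∈ I) :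
    Lit.neg A ∈ WP P {y ∈ I | l y.atomOf < l A} :=
  LP.neg_mem_WP.2 ((hl.unfounded_neg_le hI (l A)).subset_UP ⟨hA, le_rfl⟩)

theorem CondWF.subset_WFModel (hl : CondWF P I l) (hI : Consistent I) : I ⊆ WFModel P := by
  refine subset_lfp_of_rank (wpHom P) (fun x => l x.atomOf) fun x hx => ?_
  cases x with
  | pos A => exact hl.pos_mem_WP hI hx
  | neg A => exact hl.neg_mem_WP hI hx

end Maximality

theorem wellfounded_model_char_general (P : Program atom) :
    Model3 P (WFModel P) ∧
    (∃ l : atom → Ordinal.{0}, CondWF P (WFModel P) l) ∧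
    ∀ (I : Interp atom) (l : atom → Ordinal.{0}),
      Consistent I → CondWF P I l → I ⊆ WFModel P :=
  ⟨model3_WFModel P, ⟨wfLevel P, condWF_WFModel P⟩, fun _ _ hI hl => hl.subset_WFModel hI⟩

/-- the well-founded model is the greatest model `I` admitting an
`I`-partial level mapping `l` such that `P` satisfies (WF) w.r.t. `I` and `l`. -/
theorem wellfounded_model_char {atom : Type} [Countable atom] (P : Program atom) :
    Model3 P (WFModel P) ∧
    (∃ l : atom → Ordinal.{0}, CondWF P (WFModel P) l) ∧
    ∀ (I : Interp atom) (l : atom → Ordinal.{0}),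
      Model3 P I → CondWF P I l → I ⊆ WFModel P :=
  (wellfounded_model_char_general P).imp_right fun ⟨hl, hmax⟩ =>
    ⟨hl, fun I l hI => hmax I l hI.1⟩

end LP
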